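/- arXiv:1203.1764 — 2 statements merged into one kernel-verified Lean document; each statement's English description precedes it below -/
import Mathlib

section
/- Let q : ℤ × ℤ → (ℝ → ℝ) be differentiable in x, h_n(j) := exp(q_{n+1}(j+1) − q_n(j)), and suppose q satisfies the semidiscrete Toda lattice q_{n,x}(j) − q_{n+1,x}(j) = h_n(j) − h_n(j−1) for all n, j ∈ ℤ. Fix n, and let φ : ℤ → (ℝ → ℝ) be differentiable and satisfy φ_x(j) = exp(q_{n+1}(j) − q_{n+1}(j−1)) φ(j−1) − φ(j) for all j ∈ ℤ. Then the function χ(j) := −exp(q_n(j) − q_{n+1}(j)) φ(j) + φ(j+1) satisfies χ_x(j) = exp(q_n(j) − q_n(j−1)) χ(j−1) − χ(j) for all j ∈ ℤ. (That is, on solutions of the lattice, the second, inequivalent Darboux–Laplace Lax pair, with the discrete Darboux operator, is compatible.) -/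
/-!
For a fixed row, write `a j = exp (qₙ j - qₙ (j - 1))`, `b j = exp (qₙ₊₁ j - qₙ₊₁ (j - 1))` and
`r j = exp (qₙ j - qₙ₊₁ j)`. Differentiating `χ = D_r φ`, where `D_r = T - r` and `T` is the shift
in `j`, and comparing the coefficients of `φ j` and `φ (j - 1)`, one sees that `D_r` carries
solutions of `φₓ = (b T⁻¹ - 1) φ` to solutions of `χₓ = (a T⁻¹ - 1) χ` as soon as
`rₓ j = b (j + 1) - a j` and `r j * b j = a j * r (j - 1)`. The second relation is the functional
equation of the exponential. The first one is the Toda equation multiplied by `r j`.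
-/

open NormedSpace (exp)

section Intertwining

/-- The Darboux operator `T - r` on sequences, where `T` is the shift `(T φ) j = φ (j + 1)`. The
continuous variable does not enter: sequences depending on `x` are transformed at each `x`. -/
def discreteDarboux {R : Type*} [Ring R] (r φ : ℤ → R) (j : ℤ) : R :=
  -r j * φ j + φ (j + 1)

/-- The operator `a T⁻¹ - 1` on sequences, where `T` is the shift in `j`. It is the right-hand side
of the evolution equation `φₓ j = a j * φ (j - 1) - φ j` of the Lax pair. -/
def laxOperator {R : Type*} [Ring R] (a φ : ℤ → R) (j : ℤ) : R :=
  a j * φ (j - 1) - φ j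

theorem discreteDarboux_laxOperator {R : Type*} [Ring R] {a b r : ℤ → R} {j : ℤ}
    (hr : r j * b j = a j * r (j - 1)) (φ : ℤ → R) :
    discreteDarboux r (laxOperator b φ) j =
      laxOperator a (discreteDarboux r φ) j + (b (j + 1) - a j) * φ j := by
  have hrφ : r j * (b j * φ (j - 1)) = a j * (r (j - 1) * φ (j - 1)) := by
    rw [← mul_assoc, hr, mul_assoc]
  simp only [discreteDarboux, laxOperator, add_sub_cancel_right, sub_add_cancel, neg_mul, mul_sub,
    hrφ, mul_add, mul_neg, sub_mul]
  abel

variable {𝕜 𝔸 : Type*} [NontriviallyNormedField 𝕜] [NormedRing 𝔸] [NormedAlgebra 𝕜 𝔸]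
  {r φ : ℤ → 𝕜 → 𝔸} {x : 𝕜} {j : ℤ}

theorem hasDerivAt_discreteDarboux {r' : 𝔸} {φ' : ℤ → 𝔸} (hr : HasDerivAt (r j) r' x)
    (hφ : ∀ i, HasDerivAt (φ i) (φ' i) x) :
    HasDerivAt (fun y => discreteDarboux (r · y) (φ · y) j)
      (-r' * φ j x + discreteDarboux (r · x) φ' j) x := by
  simpa only [discreteDarboux, add_assoc] using (hr.fun_neg.fun_mul (hφ j)).fun_add (hφ (j + 1))

theorem hasDerivAt_discreteDarboux_of_laxOperator {a b : ℤ → 𝔸}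
    (hr' : HasDerivAt (r j) (b (j + 1) - a j) x) (hr : r j x * b j = a j * r (j - 1) x)
    (hφ : ∀ i, HasDerivAt (φ i) (laxOperator b (φ · x) i) x) :
    HasDerivAt (fun y => discreteDarboux (r · y) (φ · y) j)
      (laxOperator a (discreteDarboux (r · x) (φ · x)) j) x := by
  refine (hasDerivAt_discreteDarboux hr' hφ).congr_deriv ?_
  rw [discreteDarboux_laxOperator (r := (r · x)) hr, neg_mul, neg_add_cancel_comm_assoc]

end Intertwining

section Toda

theorem exp_sub_mul_exp_sub {𝔸 : Type*} [NormedCommRing 𝔸] [NormedAlgebra ℚ 𝔸] [CompleteSpace 𝔸]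
    (a b c : 𝔸) : exp (a - b) * exp (b - c) = exp (a - c) := by
  rw [← NormedSpace.exp_add, sub_add_sub_cancel]

variable {𝕂 𝔸 : Type*} [RCLike 𝕂] [NormedCommRing 𝔸] [NormedAlgebra 𝕂 𝔸] [CompleteSpace 𝔸]

theorem hasDerivAt_exp_comp {f : 𝕂 → 𝔸} {f' : 𝔸} {x : 𝕂} (hf : HasDerivAt f f' x) :
    HasDerivAt (fun y => exp (f y)) (exp (f x) * f') x := by
  simpa [Function.comp_def] using hasFDerivAt_exp.comp_hasDerivAt x hf

variable {u v : ℤ → 𝕂 → 𝔸} {x : 𝕂} {j : ℤ} {u' v' : 𝔸}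

theorem hasDerivAt_exp_sub_of_toda (hu : HasDerivAt (u j) u' x) (hv : HasDerivAt (v j) v' x)
    (toda : u' - v' = exp (v (j + 1) x - u j x) - exp (v j x - u (j - 1) x)) :
    HasDerivAt (fun y => exp (u j y - v j y))
      (exp (v (j + 1) x - v j x) - exp (u j x - u (j - 1) x)) x := by
  let +nondep : NormedAlgebra ℚ 𝔸 := .restrictScalars ℚ 𝕂 𝔸
  refine (hasDerivAt_exp_comp (hu.fun_sub hv)).congr_deriv ?_
  rw [toda, mul_sub, exp_sub_mul_exp_sub, mul_comm, exp_sub_mul_exp_sub]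

/-- Here `u` and `v` stand for the consecutive rows `qₙ` and `qₙ₊₁` of the lattice. -/
theorem semidiscrete_second_lax_pair_compatibility_general {φ : ℤ → 𝕂 → 𝔸}
    (hu : HasDerivAt (u j) u' x) (hv : HasDerivAt (v j) v' x)
    (toda : u' - v' = exp (v (j + 1) x - u j x) - exp (v j x - u (j - 1) x))
    (hφ : ∀ i, HasDerivAt (φ i) (laxOperator (fun k => exp (v k x - v (k - 1) x)) (φ · x) i) x) :
    HasDerivAt (fun y => discreteDarboux (fun k => exp (u k y - v k y)) (φ · y) j)
      (laxOperator (fun k => exp (u k x - u (k - 1) x))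
        (discreteDarboux (fun k => exp (u k x - v k x)) (φ · x)) j) x := by
  let +nondep : NormedAlgebra ℚ 𝔸 := .restrictScalars ℚ 𝕂 𝔸
  refine hasDerivAt_discreteDarboux_of_laxOperator (r := fun k y => exp (u k y - v k y))
    (by simpa using hasDerivAt_exp_sub_of_toda hu hv toda) ?_ hφ
  simp only [exp_sub_mul_exp_sub]

end Toda

/-- on solutions of the semidiscrete Toda lattice, the second
Darboux–Laplace Lax pair (with discrete Darboux operator) is compatible:
if `φₓ(j) = exp(q_{n+1}(j) − q_{n+1}(j−1)) φ(j−1) − φ(j)`, then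
`χ(j) := −exp(qₙ(j) − q_{n+1}(j)) φ(j) + φ(j+1)` satisfies
`χₓ(j) = exp(qₙ(j) − qₙ(j−1)) χ(j−1) − χ(j)`. -/
theorem semidiscrete_second_lax_pair_compatibility
    (q : ℤ → ℤ → ℝ → ℝ)
    (hq : ∀ n j, Differentiable ℝ (q n j))
    (h : ℤ → ℤ → ℝ → ℝ)
    (hh : ∀ n j x, h n j x = Real.exp (q (n + 1) (j + 1) x - q n j x))
    (toda : ∀ (n j : ℤ) (x : ℝ),
        deriv (q n j) x - deriv (q (n + 1) j) x = h n j x - h n (j - 1) x)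
    (n : ℤ)
    (φ : ℤ → ℝ → ℝ)
    (hφd : ∀ j, Differentiable ℝ (φ j))
    (hφ : ∀ (j : ℤ) (x : ℝ),
        deriv (φ j) x
          = Real.exp (q (n + 1) j x - q (n + 1) (j - 1) x) * φ (j - 1) x - φ j x)
    (χ : ℤ → ℝ → ℝ)
    (hχ : ∀ (j : ℤ) (x : ℝ),
        χ j x = -Real.exp (q n j x - q (n + 1) j x) * φ j x + φ (j + 1) x) :
    ∀ (j : ℤ) (x : ℝ),
      deriv (χ j) x = Real.exp (q n j x - q n (j - 1) x) * χ (j - 1) x - χ j x := by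
  intro j x
  simp only [Real.exp_eq_exp_ℝ, hh, sub_add_cancel] at toda hφ hχ ⊢
  have hφ' (i : ℤ) : HasDerivAt (φ i)
      (laxOperator (fun k => exp (q (n + 1) k x - q (n + 1) (k - 1) x)) (φ · x) i) x :=
    (hφd i x).hasDerivAt.congr_deriv (hφ i x)
  rw [funext (hχ j), hχ (j - 1)]
  exact (semidiscrete_second_lax_pair_compatibility_general (hq n j x).hasDerivAt
    (hq (n + 1) j x).hasDerivAt (toda n j x) hφ').deriv
end

section
/- Let q : ℤ → (ℝ² → ℝ) be C³ functions satisfying the two-dimensional Toda lattice q_{xy}(j) = h(j) − h(j−1), where h(j) := exp(q(j+1) − q(j)) and b(j) := q_x(j). Let B¹, B² : ℤ → (ℝ² → ℝ) be C¹ functions satisfying ∂_x b(j) = B¹(j) − B¹(j−1), ∂_y B¹(j) = ∂_x h(j), ∂_x B¹(j) = B¹(j)(b(j+1) − b(j)) + B²(j) − B²(j−1), and ∂_y B²(j) = h(j) B¹(j+1) − h(j+1) B¹(j), for all j. Define F(j) := b(j)² + B¹(j) + B¹(j−1). Then for all j ∈ ℤ: ∂_y ∂_x F(j) = h(j)(F(j+1)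 − F(j)) − h(j−1)(F(j) − F(j−1)). (This identity expresses that the flow q_t(j) = b(j)² + b^{(1)}(j) + b^{(1)}(j−1) defines a symmetry of the Toda lattice.) -/
/-- Partial derivative in the first (x) variable. -/
noncomputable def pdx (f : ℝ × ℝ → ℝ) : ℝ × ℝ → ℝ :=
  fun p => deriv (fun t => f (t, p.2)) p.1

/-- Partial derivative in the second (y) variable. -/
noncomputable def pdy (f : ℝ × ℝ → ℝ) : ℝ × ℝ → ℝ :=
  fun p => deriv (fun t => f (p.1, t)) p.2

/-!
The symmetry condition integrates to a conservation law: with the flux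
`G(j) = B¹(j)(b(j+1) + b(j)) + B²(j) + B²(j−1)` one has `∂_x F(j) = G(j) − G(j−1)` and
`∂_y G(j) = h(j)(F(j+1) − F(j))`. In the second identity the terms `h(j±1) B¹(j)` coming from
`∂_y b` cancel against those coming from `∂_y B²`. Since `∂_x h(j) = h(j)(b(j+1) − b(j))`, the
whole system closes on `b`, `h`, `B¹` and `B²`, and the potential `q` can be eliminated.
-/

section PartialDerivatives

variable {f g : ℝ × ℝ → ℝ} {p : ℝ × ℝ}

theorem hasDerivAt_pdx (hf : DifferentiableAt ℝ f p) :
    HasDerivAt (fun t => f (t, p.2)) (pdx f p) p.1 :=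
  DifferentiableAt.hasDerivAt (by fun_prop)

theorem hasDerivAt_pdy (hf : DifferentiableAt ℝ f p) :
    HasDerivAt (fun t => f (p.1, t)) (pdy f p) p.2 :=
  DifferentiableAt.hasDerivAt (by fun_prop)

theorem pdx_eq_fderiv (hf : DifferentiableAt ℝ f p) : pdx f p = fderiv ℝ f p (1, 0) :=
  (hf.hasFDerivAt.comp_hasDerivAt p.1 ((hasDerivAt_id p.1).prodMk (hasDerivAt_const p.1 p.2))).deriv

theorem contDiff_pdx {n : WithTop ℕ∞} (hf : ContDiff ℝ (n + 1) f) : ContDiff ℝ n (pdx f) := by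
  have pdx_eq : pdx f = fun p => fderiv ℝ f p (1, 0) :=
    funext fun p => pdx_eq_fderiv (hf.differentiable (by simp) p)
  rw [pdx_eq]
  exact (hf.fderiv_right le_rfl).clm_apply contDiff_const

theorem pdx_exp_sub (hf : DifferentiableAt ℝ f p) (hg : DifferentiableAt ℝ g p) :
    pdx (fun p => Real.exp (f p - g p)) p = Real.exp (f p - g p) * (pdx f p - pdx g p) :=
  ((hasDerivAt_pdx hf).sub (hasDerivAt_pdx hg)).exp.deriv

theorem pdy_sub (hf : DifferentiableAt ℝ f p) (hg : DifferentiableAt ℝ g p) :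
    pdy (fun p => f p - g p) p = pdy f p - pdy g p :=
  ((hasDerivAt_pdy hf).sub (hasDerivAt_pdy hg)).deriv

end PartialDerivatives

/-- The right-hand side `F(j) = b(j)² + B¹(j) + B¹(j−1)` of the second-order flow `q_t = F`. -/
def todaFlow (b B1 : ℤ → ℝ × ℝ → ℝ) (j : ℤ) (p : ℝ × ℝ) : ℝ :=
  b j p ^ 2 + B1 j p + B1 (j - 1) p

/-- The flux `G(j) = B¹(j)(b(j+1) + b(j)) + B²(j) + B²(j−1)` of the conservation law
`∂_x F(j) = G(j) − G(j−1)` satisfied by the second-order flow `F = todaFlow b B1`. -/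
def todaFlux (b B1 B2 : ℤ → ℝ × ℝ → ℝ) (j : ℤ) (p : ℝ × ℝ) : ℝ :=
  B1 j p * (b (j + 1) p + b j p) + B2 j p + B2 (j - 1) p

section Flow

variable {b h B1 B2 : ℤ → ℝ × ℝ → ℝ}

theorem differentiable_todaFlux (hb : ∀ j, Differentiable ℝ (b j))
    (hB1 : ∀ j, Differentiable ℝ (B1 j)) (hB2 : ∀ j, Differentiable ℝ (B2 j)) (j : ℤ) :
    Differentiable ℝ (todaFlux b B1 B2 j) := by
  unfold todaFlux
  fun_prop

theorem pdx_todaFlow (hb : ∀ j, Differentiable ℝ (b j)) (hB1 : ∀ j, Differentiable ℝ (B1 j))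
    (pdx_b : ∀ j p, pdx (b j) p = B1 j p - B1 (j - 1) p)
    (pdx_B1 : ∀ j p, pdx (B1 j) p = B1 j p * (b (j + 1) p - b j p) + B2 j p - B2 (j - 1) p)
    (j : ℤ) (p : ℝ × ℝ) :
    pdx (todaFlow b B1 j) p = todaFlux b B1 B2 j p - todaFlux b B1 B2 (j - 1) p := by
  have leibniz : pdx (todaFlow b B1 j) p
      = 2 * b j p * pdx (b j) p + pdx (B1 j) p + pdx (B1 (j - 1)) p := by
    have flow_deriv := (((hasDerivAt_pdx (hb j p)).pow 2).add (hasDerivAt_pdx (hB1 j p))).add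
      (hasDerivAt_pdx (hB1 (j - 1) p))
    exact flow_deriv.deriv.trans (by simp)
  rw [leibniz, pdx_b, pdx_B1, pdx_B1, todaFlux, todaFlux, sub_add_cancel]
  ring

theorem pdy_todaFlux (hb : ∀ j, Differentiable ℝ (b j)) (hB1 : ∀ j, Differentiable ℝ (B1 j))
    (hB2 : ∀ j, Differentiable ℝ (B2 j))
    (pdy_b : ∀ j p, pdy (b j) p = h j p - h (j - 1) p)
    (pdy_B1 : ∀ j p, pdy (B1 j) p = h j p * (b (j + 1) p - b j p))
    (pdy_B2 : ∀ j p, pdy (B2 j) p = h j p * B1 (j + 1) p - h (j + 1) p * B1 j p)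
    (j : ℤ) (p : ℝ × ℝ) :
    pdy (todaFlux b B1 B2 j) p = h j p * (todaFlow b B1 (j + 1) p - todaFlow b B1 j p) := by
  have leibniz : pdy (todaFlux b B1 B2 j) p
      = pdy (B1 j) p * (b (j + 1) p + b j p) + B1 j p * (pdy (b (j + 1)) p + pdy (b j) p)
        + pdy (B2 j) p + pdy (B2 (j - 1)) p :=
    ((((hasDerivAt_pdy (hB1 j p)).mul
      ((hasDerivAt_pdy (hb (j + 1) p)).add (hasDerivAt_pdy (hb j p)))).add
      (hasDerivAt_pdy (hB2 j p))).add (hasDerivAt_pdy (hB2 (j - 1) p))).deriv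
  simp only [leibniz, pdy_b, pdy_B1, pdy_B2, todaFlow, sub_add_cancel, add_sub_cancel_right]
  ring

theorem toda_second_order_symmetry_general (hb : ∀ j, Differentiable ℝ (b j))
    (hB1 : ∀ j, Differentiable ℝ (B1 j)) (hB2 : ∀ j, Differentiable ℝ (B2 j))
    (pdx_b : ∀ j p, pdx (b j) p = B1 j p - B1 (j - 1) p)
    (pdy_b : ∀ j p, pdy (b j) p = h j p - h (j - 1) p)
    (pdx_B1 : ∀ j p, pdx (B1 j) p = B1 j p * (b (j + 1) p - b j p) + B2 j p - B2 (j - 1) p)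
    (pdy_B1 : ∀ j p, pdy (B1 j) p = h j p * (b (j + 1) p - b j p))
    (pdy_B2 : ∀ j p, pdy (B2 j) p = h j p * B1 (j + 1) p - h (j + 1) p * B1 j p)
    (j : ℤ) (p : ℝ × ℝ) :
    pdy (pdx (todaFlow b B1 j)) p
      = h j p * (todaFlow b B1 (j + 1) p - todaFlow b B1 j p)
        - h (j - 1) p * (todaFlow b B1 j p - todaFlow b B1 (j - 1) p) := by
  have flux_differentiable := differentiable_todaFlux hb hB1 hB2
  have pdy_flux := pdy_todaFlux hb hB1 hB2 pdy_b pdy_B1 pdy_B2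
  rw [funext (pdx_todaFlow hb hB1 pdx_b pdx_B1 j),
    pdy_sub (flux_differentiable j p) (flux_differentiable (j - 1) p), pdy_flux, pdy_flux,
    sub_add_cancel]

end Flow

/-- the flow `q_t(j) = b(j)² + b⁽¹⁾(j) + b⁽¹⁾(j−1)` defines a symmetry
of the 2D Toda lattice: `∂_y∂_x F(j) = h(j)(F(j+1) − F(j)) − h(j−1)(F(j) − F(j−1))`.
Here `B1, B2` play the roles of the nonlocal variables `b⁽¹⁾, b⁽²⁾`. -/
theorem toda_second_order_symmetry
    (q h b : ℤ → ℝ × ℝ → ℝ)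
    (hq : ∀ j, ContDiff ℝ 3 (q j))
    (hh : ∀ j p, h j p = Real.exp (q (j + 1) p - q j p))
    (hb : ∀ j, b j = pdx (q j))
    (toda : ∀ (j : ℤ) (p : ℝ × ℝ), pdy (pdx (q j)) p = h j p - h (j - 1) p)
    (B1 B2 : ℤ → ℝ × ℝ → ℝ)
    (hB1 : ∀ j, ContDiff ℝ 1 (B1 j))
    (hB2 : ∀ j, ContDiff ℝ 1 (B2 j))
    (e1 : ∀ (j : ℤ) (p : ℝ × ℝ), pdx (b j) p = B1 j p - B1 (j - 1) p)
    (e2 : ∀ (j : ℤ) (p : ℝ × ℝ), pdy (B1 j) p = pdx (h j) p)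
    (e3 : ∀ (j : ℤ) (p : ℝ × ℝ),
        pdx (B1 j) p = B1 j p * (b (j + 1) p - b j p) + B2 j p - B2 (j - 1) p)
    (e4 : ∀ (j : ℤ) (p : ℝ × ℝ),
        pdy (B2 j) p = h j p * B1 (j + 1) p - h (j + 1) p * B1 j p)
    (F : ℤ → ℝ × ℝ → ℝ)
    (hF : ∀ j p, F j p = (b j p) ^ 2 + B1 j p + B1 (j - 1) p) :
    ∀ (j : ℤ) (p : ℝ × ℝ),
      pdy (pdx (F j)) p
        = h j p * (F (j + 1) p - F j p) - h (j - 1) p * (F j p - F (j - 1) p) := by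
  obtain rfl : F = todaFlow b B1 := funext₂ hF
  obtain rfl : b = fun j => pdx (q j) := funext hb
  obtain rfl : h = fun j p => Real.exp (q (j + 1) p - q j p) := funext₂ hh
  have q_diff (j : ℤ) : Differentiable ℝ (q j) := (hq j).differentiable (by simp)
  have b_contDiff (j : ℤ) : ContDiff ℝ 2 (pdx (q j)) := contDiff_pdx (hq j)
  exact toda_second_order_symmetry_general (fun j => (b_contDiff j).differentiable (by simp))
    (fun j => (hB1 j).differentiable (by simp)) (fun j => (hB2 j).differentiable (by simp))
    e1 toda e3 (fun j p => (e2 j p).trans (pdx_exp_sub (q_diff (j + 1) p) (q_diff j p))) e4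
end
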